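/- For any jointly distributed random variables X, Y, Π on finite sets, the internal information cost is at most the external information cost: I(Π;X|Y) + I(Π;Y|X) ≤ I(Π;X,Y), whenever Π is the transcript of a communication protocol on inputs (X,Y); in particular this follows from the identity I(Π;X,Y) - I(Π;X|Y) - I(Π;Y|X) = I(X;Y) - I(X;Y|Π) together with the monotonicity-of-correlation property I(X;Y|Π) ≤ I(X;Y) for protocol transcripts. -/

import Mathlib

open Finset

noncomputable section

/-- `p` is a probability mass function on the finite type `Ω`. -/
def IsPMF {Ω : Type*} [Fintype Ω] (p : Ω → ℝ) : Prop :=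
  (∀ ω, 0 ≤ p ω) ∧ ∑ ω, p ω = 1

/-- Probability that the random variable `X` equals `x` under `p`. -/
def pr {Ω α : Type*} [Fintype Ω] [DecidableEq α] (p : Ω → ℝ) (X : Ω → α) (x : α) : ℝ :=
  ∑ ω, if X ω = x then p ω else 0

/-- Shannon entropy (base 2) of a distribution `q` on a finite type. -/
def Hq {α : Type*} [Fintype α] (q : α → ℝ) : ℝ :=
  ∑ x, -(q x * Real.logb 2 (q x))

/-- Shannon entropy (base 2) of the random variable `X` under `p`. -/
def Hent {Ω α : Type*} [Fintype Ω] [Fintype α] [DecidableEq α] (p : Ω → ℝ) (X : Ω → α) : ℝ :=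
  Hq (pr p X)

/-- Conditional entropy `H(X|Y) = H(X,Y) - H(Y)`. -/
def condH {Ω α β : Type*} [Fintype Ω] [Fintype α] [Fintype β] [DecidableEq α] [DecidableEq β]
    (p : Ω → ℝ) (X : Ω → α) (Y : Ω → β) : ℝ :=
  Hent p (fun ω => (X ω, Y ω)) - Hent p Y

/-- Mutual information `I(X;Y)`. -/
def MI {Ω α β : Type*} [Fintype Ω] [Fintype α] [Fintype β] [DecidableEq α] [DecidableEq β]
    (p : Ω → ℝ) (X : Ω → α) (Y : Ω → β) : ℝ :=
  Hent p X + Hent p Y - Hent p (fun ω => (X ω, Y ω))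

/-- Conditional mutual information `I(X;Y|Z) = H(X|Z) - H(X|(Y,Z))`. -/
def condMI {Ω α β γ : Type*} [Fintype Ω] [Fintype α] [Fintype β] [Fintype γ]
    [DecidableEq α] [DecidableEq β] [DecidableEq γ]
    (p : Ω → ℝ) (X : Ω → α) (Y : Ω → β) (Z : Ω → γ) : ℝ :=
  condH p X Z - condH p X (fun ω => (Y ω, Z ω))

/-- Total variation distance between distributions on a finite type. -/
def TV {α : Type*} [Fintype α] (q₁ q₂ : α → ℝ) : ℝ :=
  (∑ x, |q₁ x - q₂ x|) / 2

/-- Binary entropy function (base 2). -/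
def binEnt (d : ℝ) : ℝ :=
  -(d * Real.logb 2 d) - ((1 - d) * Real.logb 2 (1 - d))

/-- Min-entropy (base 2) of a distribution on a nonempty finite type. -/
def Hinf {α : Type*} [Fintype α] [Nonempty α] (q : α → ℝ) : ℝ :=
  -Real.logb 2 (⨆ x, q x)

/-- `A` and `B` are conditionally independent given `C` (zero conditional mutual
information), i.e. the Markov chain `A — C — B` holds. -/
def CondIndep {Ω α β γ : Type*} [Fintype Ω] [Fintype α] [Fintype β] [Fintype γ]
    [DecidableEq α] [DecidableEq β] [DecidableEq γ]
    (p : Ω → ℝ) (A : Ω → α) (B : Ω → β) (C : Ω → γ) : Prop :=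
  condMI p A B C = 0

/-- The prefix `Π^t = (Π₁,…,Π_t)` of the messages `Π`. -/
def prefixT {Ω γ : Type*} {r : ℕ} (Msg : Fin r → Ω → γ) (t : ℕ) (ht : t ≤ r) (ω : Ω) :
    Fin t → γ :=
  fun j => Msg (Fin.castLE ht j) ω

/-- The expectation of a function of `X` can be computed from the law of `X`. -/
lemma sum_pr_mul {Ω α : Type*} [Fintype Ω] [Fintype α] [DecidableEq α]
    (p : Ω → ℝ) (X : Ω → α) (g : α → ℝ) :
    ∑ x, pr p X x * g x = ∑ ω, p ω * g (X ω) := by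
  simp only [pr, Finset.sum_mul, ite_mul, zero_mul]
  rw [Finset.sum_comm]
  simp

/-- Entropy as an expectation over the sample space. -/
lemma Hent_eq_sum {Ω α : Type*} [Fintype Ω] [Fintype α] [DecidableEq α]
    (p : Ω → ℝ) (X : Ω → α) :
    Hent p X = ∑ ω, -(p ω * Real.logb 2 (pr p X (X ω))) := by
  simp only [Hent, Hq, Finset.sum_neg_distrib]
  rw [sum_pr_mul p X fun x => Real.logb 2 (pr p X x)]

/-- Entropy only depends on the partition of the sample space induced by the variable. -/
lemma Hent_congr {Ω α β : Type*} [Fintype Ω] [Fintype α] [Fintype β] [DecidableEq α]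
    [DecidableEq β] (p : Ω → ℝ) {U : Ω → α} {V : Ω → β}
    (h : ∀ ω ω', U ω = U ω' ↔ V ω = V ω') : Hent p U = Hent p V := by
  simp only [Hent_eq_sum, pr, h]

/-- A random variable with values in a subsingleton has zero entropy. -/
lemma Hent_of_subsingleton {Ω α : Type*} [Fintype Ω] [Fintype α] [DecidableEq α]
    [Subsingleton α] {p : Ω → ℝ} (hp : IsPMF p) (X : Ω → α) : Hent p X = 0 := by
  have hX (ω ω' : Ω) : (X ω = X ω') = True := eq_true (Subsingleton.elim _ _)
  simp [Hent_eq_sum, pr, hX, hp.2]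

lemma pr_nonneg {Ω α : Type*} [Fintype Ω] [DecidableEq α] {p : Ω → ℝ} (hp : IsPMF p)
    (X : Ω → α) (x : α) : 0 ≤ pr p X x :=
  Finset.sum_nonneg fun ω _ => by split_ifs <;> simp [hp.1 ω]

lemma pr_self_pos {Ω α : Type*} [Fintype Ω] [DecidableEq α] {p : Ω → ℝ} (hp : IsPMF p)
    (X : Ω → α) {ω : Ω} (hω : 0 < p ω) : 0 < pr p X (X ω) := by
  refine Finset.sum_pos' (fun ω' _ => ?_) ⟨ω, Finset.mem_univ _, by simpa using hω⟩
  split_ifs <;> simp [hp.1 ω']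

lemma sum_pr {Ω α : Type*} [Fintype Ω] [Fintype α] [DecidableEq α] {p : Ω → ℝ}
    (hp : IsPMF p) (X : Ω → α) : ∑ x, pr p X x = 1 := by
  simpa [hp.2] using sum_pr_mul p X fun _ => 1

lemma sum_pr_pair {Ω α β : Type*} [Fintype Ω] [Fintype α] [DecidableEq α] [DecidableEq β]
    (p : Ω → ℝ) (A : Ω → α) (C : Ω → β) (c : β) :
    ∑ a, pr p (fun ω => (A ω, C ω)) (a, c) = pr p C c := by
  simp only [pr, Prod.mk.injEq, ite_and]
  rw [Finset.sum_comm]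
  simp

/-- The conditionally independent coupling of `A` and `B` given `C`, restricted to the support
of the joint law, has total mass at most one. -/
lemma sum_mul_ratio_le_one {Ω α β γ : Type*} [Fintype Ω] [Fintype α] [Fintype β] [Fintype γ]
    [DecidableEq α] [DecidableEq β] [DecidableEq γ] {p : Ω → ℝ} (hp : IsPMF p)
    (A : Ω → α) (B : Ω → β) (C : Ω → γ) :
    ∑ ω, p ω * (pr p (fun ω => (A ω, C ω)) (A ω, C ω) * pr p (fun ω => (B ω, C ω)) (B ω, C ω) /
      (pr p (fun ω => (A ω, B ω, C ω)) (A ω, B ω, C ω) * pr p C (C ω))) ≤ 1 := by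
  rw [← sum_pr_mul p (fun ω => (A ω, B ω, C ω)) fun x =>
    pr p (fun ω => (A ω, C ω)) (x.1, x.2.2) * pr p (fun ω => (B ω, C ω)) (x.2.1, x.2.2) /
      (pr p (fun ω => (A ω, B ω, C ω)) x * pr p C x.2.2)]
  calc
    _ ≤ ∑ x : α × β × γ, pr p (fun ω => (A ω, C ω)) (x.1, x.2.2) *
          pr p (fun ω => (B ω, C ω)) (x.2.1, x.2.2) / pr p C x.2.2 := by
        refine Finset.sum_le_sum fun x _ => ?_
        have hA := pr_nonneg hp (fun ω => (A ω, C ω)) (x.1, x.2.2)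
        have hB := pr_nonneg hp (fun ω => (B ω, C ω)) (x.2.1, x.2.2)
        have hC := pr_nonneg hp C x.2.2
        rcases (pr_nonneg hp (fun ω => (A ω, B ω, C ω)) x).eq_or_lt with h | h
        · rw [← h, zero_mul]
          positivity
        · rw [← mul_div_assoc, mul_div_mul_left _ _ h.ne']
    _ = ∑ c, (∑ a, pr p (fun ω => (A ω, C ω)) (a, c)) *
          (∑ b, pr p (fun ω => (B ω, C ω)) (b, c)) / pr p C c := by
        simp only [Fintype.sum_prod_type, Finset.sum_mul_sum, Finset.sum_div]
        rw [Finset.sum_comm' (t' := Finset.univ) (s' := fun _ => Finset.univ) (by simp)]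
        rw [Finset.sum_congr rfl fun b _ => Finset.sum_comm, Finset.sum_comm]
        exact Finset.sum_congr rfl fun c _ => Finset.sum_comm
    _ = ∑ c, pr p C c := by
        simp only [sum_pr_pair, mul_self_div_self]
    _ ≤ 1 := (sum_pr hp C).le

/-- Conditional mutual information is nonnegative. -/
lemma condMI_nonneg {Ω α β γ : Type*} [Fintype Ω] [Fintype α] [Fintype β] [Fintype γ]
    [DecidableEq α] [DecidableEq β] [DecidableEq γ] {p : Ω → ℝ} (hp : IsPMF p)
    (A : Ω → α) (B : Ω → β) (C : Ω → γ) : 0 ≤ condMI p A B C := by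
  have hratio := sum_mul_ratio_le_one hp A B C
  have hlog : 0 < Real.log 2 := Real.log_pos one_lt_two
  refine nonneg_of_mul_nonneg_left (b := Real.log 2) ?_ hlog
  simp only [condMI, condH, Hent_eq_sum, ← Finset.sum_sub_distrib, Finset.sum_mul]
  rw [← sub_nonneg, ← hp.2, ← Finset.sum_sub_distrib] at hratio
  refine hratio.trans (Finset.sum_le_sum fun ω _ => ?_)
  rcases (hp.1 ω).eq_or_lt with h | h
  · simp [← h]
  have hA := pr_self_pos hp (fun ω => (A ω, C ω)) h
  have hB := pr_self_pos hp (fun ω => (B ω, C ω)) h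
  have hC := pr_self_pos hp C h
  have hABC := pr_self_pos hp (fun ω => (A ω, B ω, C ω)) h
  have key := Real.log_le_sub_one_of_pos (div_pos (mul_pos hA hB) (mul_pos hABC hC))
  rw [Real.log_div (by positivity) (by positivity), Real.log_mul hA.ne' hB.ne',
    Real.log_mul hABC.ne' hC.ne'] at key
  have := mul_le_mul_of_nonneg_left key h.le
  simp only [Real.logb]
  field_simp at this ⊢
  linarith

lemma condMI_comm {Ω α β γ : Type*} [Fintype Ω] [Fintype α] [Fintype β] [Fintype γ]
    [DecidableEq α] [DecidableEq β] [DecidableEq γ] (p : Ω → ℝ)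
    (A : Ω → α) (B : Ω → β) (C : Ω → γ) : condMI p A B C = condMI p B A C := by
  have h : Hent p (fun ω => (A ω, B ω, C ω)) = Hent p (fun ω => (B ω, A ω, C ω)) :=
    Hent_congr p fun ω ω' => by grind
  simp only [condMI, condH, h]
  ring

lemma condMI_congr_right {Ω α β γ δ : Type*} [Fintype Ω] [Fintype α] [Fintype β] [Fintype γ]
    [Fintype δ] [DecidableEq α] [DecidableEq β] [DecidableEq γ] [DecidableEq δ] (p : Ω → ℝ)
    (A : Ω → α) (B : Ω → β) {C : Ω → γ} {D : Ω → δ} (h : ∀ ω ω', C ω = C ω' ↔ D ω = D ω') :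
    condMI p A B C = condMI p A B D := by
  simp only [condMI, condH]
  congr 2
  · exact Hent_congr p fun ω ω' => by simp [h]
  · exact Hent_congr p h
  · exact Hent_congr p fun ω ω' => by simp [h]
  · exact Hent_congr p fun ω ω' => by simp [h]

/-- Conditioning on a message `M` that depends on `Y` only through `(X, Q)` does not increase
the mutual information between `X` and `Y`. -/
lemma condMI_pair_le {Ω α β γ δ : Type*} [Fintype Ω] [Fintype α] [Fintype β] [Fintype γ]
    [Fintype δ] [DecidableEq α] [DecidableEq β] [DecidableEq γ] [DecidableEq δ] {p : Ω → ℝ}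
    (hp : IsPMF p) {X : Ω → α} {Y : Ω → β} {M : Ω → γ} {Q : Ω → δ}
    (h : CondIndep p M Y (fun ω => (X ω, Q ω))) :
    condMI p X Y (fun ω => (M ω, Q ω)) ≤ condMI p X Y Q := by
  have hMYQ := condMI_nonneg hp M Y Q
  have e₁ : Hent p (fun ω => (X ω, M ω, Q ω)) = Hent p (fun ω => (M ω, X ω, Q ω)) :=
    Hent_congr p fun ω ω' => by grind
  have e₂ : Hent p (fun ω => (X ω, Y ω, M ω, Q ω)) = Hent p (fun ω => (M ω, Y ω, X ω, Q ω)) :=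
    Hent_congr p fun ω ω' => by grind
  have e₃ : Hent p (fun ω => (Y ω, M ω, Q ω)) = Hent p (fun ω => (M ω, Y ω, Q ω)) :=
    Hent_congr p fun ω ω' => by grind
  have e₄ : Hent p (fun ω => (X ω, Y ω, Q ω)) = Hent p (fun ω => (Y ω, X ω, Q ω)) :=
    Hent_congr p fun ω ω' => by grind
  simp only [CondIndep, condMI, condH] at *
  linarith

lemma condMI_of_subsingleton {Ω α β γ : Type*} [Fintype Ω] [Fintype α] [Fintype β] [Fintype γ]
    [DecidableEq α] [DecidableEq β] [DecidableEq γ] [Subsingleton γ] {p : Ω → ℝ} (hp : IsPMF p)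
    (A : Ω → α) (B : Ω → β) (C : Ω → γ) : condMI p A B C = MI p A B := by
  have hC (ω ω' : Ω) : C ω = C ω' := Subsingleton.elim _ _
  have e₁ : Hent p (fun ω => (A ω, C ω)) = Hent p A :=
    Hent_congr p fun ω ω' => by simp [hC ω ω']
  have e₂ : Hent p (fun ω => (B ω, C ω)) = Hent p B :=
    Hent_congr p fun ω ω' => by simp [hC ω ω']
  have e₃ : Hent p (fun ω => (A ω, B ω, C ω)) = Hent p (fun ω => (A ω, B ω)) :=
    Hent_congr p fun ω ω' => by simp [hC ω ω']
  simp only [condMI, condH, MI, e₁, e₂, e₃, Hent_of_subsingleton hp C]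
  ring

/-- External minus internal information cost equals the loss of correlation. -/
lemma MI_sub_condMI_sub_condMI {Ω α β γ : Type*} [Fintype Ω] [Fintype α] [Fintype β] [Fintype γ]
    [DecidableEq α] [DecidableEq β] [DecidableEq γ] (p : Ω → ℝ)
    (X : Ω → α) (Y : Ω → β) (P : Ω → γ) :
    MI p P (fun ω => (X ω, Y ω)) - condMI p P X Y - condMI p P Y X =
      MI p X Y - condMI p X Y P := by
  have e₁ : Hent p (fun ω => (P ω, X ω)) = Hent p (fun ω => (X ω, P ω)) :=
    Hent_congr p fun ω ω' => by grind
  have e₂ : Hent p (fun ω => (P ω, Y ω)) = Hent p (fun ω => (Y ω, P ω)) :=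
    Hent_congr p fun ω ω' => by grind
  have e₃ : Hent p (fun ω => (P ω, Y ω, X ω)) = Hent p (fun ω => (P ω, X ω, Y ω)) :=
    Hent_congr p fun ω ω' => by grind
  have e₄ : Hent p (fun ω => (X ω, Y ω, P ω)) = Hent p (fun ω => (P ω, X ω, Y ω)) :=
    Hent_congr p fun ω ω' => by grind
  have e₅ : Hent p (fun ω => (Y ω, X ω)) = Hent p (fun ω => (X ω, Y ω)) :=
    Hent_congr p fun ω ω' => by grind
  simp only [condMI, condH, MI, e₁, e₂, e₃, e₄, e₅]
  ring

lemma prefixT_succ_eq_iff {Ω γ : Type*} {r : ℕ} (Msg : Fin r → Ω → γ) (t : ℕ) (ht : t < r)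
    (ω ω' : Ω) : prefixT Msg (t + 1) ht ω = prefixT Msg (t + 1) ht ω' ↔
      (Msg ⟨t, ht⟩ ω, prefixT Msg t ht.le ω) = (Msg ⟨t, ht⟩ ω', prefixT Msg t ht.le ω') := by
  simp only [funext_iff, Prod.mk.injEq, prefixT, Fin.forall_fin_succ']
  exact and_comm

/-- Conditioning on any prefix of a protocol transcript does not increase the mutual information
between the inputs. -/
lemma condMI_prefixT_le {Ω 𝒳 𝒴 γ : Type*} [Fintype Ω] [Fintype 𝒳] [Fintype 𝒴] [Fintype γ]
    [DecidableEq 𝒳] [DecidableEq 𝒴] [DecidableEq γ] {r : ℕ}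
    {p : Ω → ℝ} (hp : IsPMF p) {X : Ω → 𝒳} {Y : Ω → 𝒴} {Msg : Fin r → Ω → γ}
    (hodd : ∀ i : Fin r, i.val % 2 = 0 →
      CondIndep p (Msg i) Y (fun ω => (X ω, prefixT Msg i.val i.isLt.le ω)))
    (heven : ∀ i : Fin r, i.val % 2 = 1 →
      CondIndep p (Msg i) X (fun ω => (Y ω, prefixT Msg i.val i.isLt.le ω)))
    (t : ℕ) (ht : t ≤ r) : condMI p X Y (prefixT Msg t ht) ≤ MI p X Y := by
  induction t with
  | zero => exact (condMI_of_subsingleton hp _ _ _).le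
  | succ t ih =>
    refine le_trans ?_ (ih (Nat.le_of_succ_le ht))
    rw [condMI_congr_right p X Y (prefixT_succ_eq_iff Msg t ht)]
    rcases Nat.mod_two_eq_zero_or_one t with h | h
    · exact condMI_pair_le hp (hodd ⟨t, ht⟩ h)
    · rw [condMI_comm p X Y, condMI_comm p X Y]
      exact condMI_pair_le hp (heven ⟨t, ht⟩ h)

/-- If `Π = (Π₁,…,Π_r)` is the transcript of a private-coin protocol on
inputs `(X,Y)` (for odd `t`, `Π_t — (X,Π^{t-1}) — Y`; for even `t`,
`X — (Y,Π^{t-1}) — Π_t`; message 1 is the 0-based index 0, spoken by Alice), then the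
internal information cost is at most the external one:
`I(Π;X|Y) + I(Π;Y|X) ≤ I(Π;X,Y)`; equivalently (via the identity
`I(Π;X,Y) - I(Π;X|Y) - I(Π;Y|X) = I(X;Y) - I(X;Y|Π)`) one has the
monotonicity-of-correlation property `I(X;Y|Π) ≤ I(X;Y)`. -/
theorem stmt_13 {Ω 𝒳 𝒴 γ : Type*} [Fintype Ω] [Fintype 𝒳] [Fintype 𝒴] [Fintype γ]
    [DecidableEq 𝒳] [DecidableEq 𝒴] [DecidableEq γ] {r : ℕ}
    (p : Ω → ℝ) (hp : IsPMF p) (X : Ω → 𝒳) (Y : Ω → 𝒴) (Msg : Fin r → Ω → γ)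
    (hodd : ∀ i : Fin r, i.val % 2 = 0 →
      CondIndep p (Msg i) Y (fun ω => (X ω, prefixT Msg i.val i.isLt.le ω)))
    (heven : ∀ i : Fin r, i.val % 2 = 1 →
      CondIndep p (Msg i) X (fun ω => (Y ω, prefixT Msg i.val i.isLt.le ω))) :
    condMI p (prefixT Msg r le_rfl) X Y + condMI p (prefixT Msg r le_rfl) Y X
        ≤ MI p (prefixT Msg r le_rfl) (fun ω => (X ω, Y ω))
    ∧ condMI p X Y (prefixT Msg r le_rfl) ≤ MI p X Y := by
  have hmono := condMI_prefixT_le hp hodd heven r le_rfl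
  have hid := MI_sub_condMI_sub_condMI p X Y (prefixT Msg r le_rfl)
  exact ⟨by linarith, hmono⟩

end
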